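/- arXiv:1711.10392 — 3 statements merged into one kernel-verified Lean document; each statement's English description precedes it below -/
import Mathlib

section
/- Let n ≥ 1, E = EuclideanSpace ℝ (Fin (n+1)), let W ⊆ E be a linear subspace with finrank W = n, and let x ∈ E be such that the affine subspace {x + w : w ∈ W} is disjoint from the closed unit ball centered at the origin. If σ ∈ E satisfies ‖σ‖ = 1 and ⟪x, σ⟫ = 1, then there exists w ∈ W with ⟪σ, w⟫ ≠ 0 (equivalently, the orthogonal projection of σ onto W is nonzero). -/
open scoped InnerProductSpace

/-- If the affine subspace `x + W` (with `W` of codimension one) avoids the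
closed unit ball, then every tangency point `σ` of a tangent hyperplane of the
unit sphere through `x` has nonzero orthogonal projection on `W`: the covector
`d_xΦ(x,σ)` does not vanish on `W = T_x X`. -/
theorem dxPhi_ne_zero (n : ℕ) (hn : 1 ≤ n)
    (W : Submodule ℝ (EuclideanSpace ℝ (Fin (n + 1))))
    (hW : Module.finrank ℝ W = n)
    (x : EuclideanSpace ℝ (Fin (n + 1)))
    (hdisj : Disjoint {z : EuclideanSpace ℝ (Fin (n + 1)) | ∃ w ∈ W, z = x + w}
      (Metric.closedBall (0 : EuclideanSpace ℝ (Fin (n + 1))) 1))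
    (σ : EuclideanSpace ℝ (Fin (n + 1))) (hσ : ‖σ‖ = 1) (hxσ : ⟪x, σ⟫_ℝ = 1) :
    ∃ w ∈ W, ⟪σ, w⟫_ℝ ≠ 0 := by
  by_contra! h
  have hσ0 : σ ≠ 0 := by
    rintro rfl
    simp at hσ
  have hle : W ≤ (Submodule.span ℝ {σ})ᗮ := by
    intro w hw
    exact Submodule.mem_orthogonal_singleton_iff_inner_right.mpr (h w hw)
  have : Fact (Module.finrank ℝ (EuclideanSpace ℝ (Fin (n + 1))) = n + 1) := ⟨by simp⟩
  have heq : W = (Submodule.span ℝ {σ})ᗮ := by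
    apply Submodule.eq_of_le_of_finrank_eq hle
    rw [hW, Submodule.finrank_orthogonal_span_singleton (n := n) hσ0]
  have hmem : σ - x ∈ W := by
    rw [heq]
    apply Submodule.mem_orthogonal_singleton_iff_inner_right.mpr
    rw [inner_sub_right, real_inner_comm, real_inner_self_eq_norm_sq, hσ,
      real_inner_comm, hxσ]
    norm_num
  refine (Set.disjoint_left.mp hdisj : _) (show σ ∈ _ from ⟨σ - x, hmem, by simp⟩) ?_
  simp [hσ]
end

section
/- Let n ≥ 1 and E = EuclideanSpace ℝ (Fin (n+1)). Let x, y ∈ E with x ≠ y and ‖y‖ > 1. Then the line {y + t • (x − y) : t ∈ ℝ} through x and y is disjoint from the closed unit ball centered at the origin if and only if there exist σ₁, σ₂ ∈ E with ‖σ₁‖ = ‖σ₂‖ = 1, ⟪y, σ₁⟫ = 1, ⟪y, σ₂⟫ = 1, and ⟪x − y, σ₁⟫ > 0 while ⟪x − y, σ₂⟫ < 0. -/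
open scoped InnerProductSpace

/-- Geometric core of Lemma 2: for `‖y‖ > 1`, the line through `x ≠ y` avoids
the closed unit ball iff `Φ(x,·) = ⟪x − y, ·⟫` changes sign on
`Z(y) = {σ : ‖σ‖ = 1, ⟪y, σ⟫ = 1}`. -/
theorem line_misses_ball_iff_sign_change (n : ℕ) (hn : 1 ≤ n)
    (x y : EuclideanSpace ℝ (Fin (n + 1))) (hxy : x ≠ y) (hy : 1 < ‖y‖) :
    (∀ t : ℝ, y + t • (x - y) ∉
        Metric.closedBall (0 : EuclideanSpace ℝ (Fin (n + 1))) 1) ↔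
      ∃ σ₁ σ₂ : EuclideanSpace ℝ (Fin (n + 1)),
        ‖σ₁‖ = 1 ∧ ‖σ₂‖ = 1 ∧ ⟪y, σ₁⟫_ℝ = 1 ∧ ⟪y, σ₂⟫_ℝ = 1 ∧
        0 < ⟪x - y, σ₁⟫_ℝ ∧ ⟪x - y, σ₂⟫_ℝ < 0 := by
  constructor
  · intro h
    have hd : x - y ≠ 0 := sub_ne_zero.mpr hxy
    set d := x - y with hd_def
    have hD : 0 < ⟪d, d⟫_ℝ := real_inner_self_pos.mpr hd
    set D := ⟪d, d⟫_ℝ with hDdef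
    obtain ⟨t, ht⟩ : ∃ t : ℝ, ⟪y, d⟫_ℝ + t * D = 0 :=
      ⟨-⟪y, d⟫_ℝ / D, by field_simp; ring⟩
    obtain ⟨p, hp⟩ : ∃ p, p = y + t • d := ⟨_, rfl⟩
    have hpd : ⟪p, d⟫_ℝ = 0 := by
      rw [hp, inner_add_left, real_inner_smul_left]; exact ht
    have hyp : y = p - t • d := by rw [hp]; simp
    have hP : 1 < ⟪p, p⟫_ℝ := by
      have h1 := h t
      rw [← hp, mem_closedBall_zero_iff, not_le] at h1
      rw [real_inner_self_eq_norm_sq]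
      nlinarith
    set P := ⟪p, p⟫_ℝ with hPdef
    have key : ∀ b : ℝ, (1 + t * b * D) ^ 2 + b ^ 2 * D * P = P →
        ∃ σ : EuclideanSpace ℝ (Fin (n + 1)),
          ‖σ‖ = 1 ∧ ⟪y, σ⟫_ℝ = 1 ∧ ⟪d, σ⟫_ℝ = b * D := by
      intro b hb
      have hdp : ⟪d, p⟫_ℝ = 0 := by rw [real_inner_comm]; exact hpd
      obtain ⟨a, ha⟩ : ∃ a : ℝ, a * P = 1 + t * b * D :=
        ⟨(1 + t * b * D) / P, by field_simp⟩
      refine ⟨a • p + b • d, ?_, ?_, ?_⟩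
      · have h2 : ‖a • p + b • d‖ ^ 2 = 1 := by
          rw [← real_inner_self_eq_norm_sq]
          simp only [inner_add_left, inner_add_right, real_inner_smul_left,
            real_inner_smul_right, hpd, hdp, ← hPdef, ← hDdef]
          rw [← ha] at hb
          have : P * (a ^ 2 * P + b ^ 2 * D) = P * 1 := by linarith
          have := mul_left_cancel₀ (by linarith : P ≠ 0) this
          linarith
        have h3 := norm_nonneg (a • p + b • d)
        nlinarith
      · rw [hyp]
        simp only [inner_sub_left, inner_add_right, real_inner_smul_left,
          real_inner_smul_right, hpd, hdp, ← hPdef, ← hDdef]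
        linarith
      · simp only [inner_add_right, real_inner_smul_right, hdp, ← hDdef]
        ring
    obtain ⟨A, hA⟩ : ∃ A, A = t ^ 2 * D ^ 2 + D * P := ⟨_, rfl⟩
    have hApos : 0 < A := by
      have : 0 < D * P := mul_pos hD (by linarith)
      rw [hA]; positivity
    have hAP : 0 < A * (P - 1) := mul_pos hApos (by linarith)
    obtain ⟨s, hs⟩ : ∃ s, s = Real.sqrt ((t * D) ^ 2 + A * (P - 1)) := ⟨_, rfl⟩
    have hs2 : s ^ 2 = (t * D) ^ 2 + A * (P - 1) := by
      rw [hs]; exact Real.sq_sqrt (by positivity)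
    have hs0 : 0 ≤ s := by rw [hs]; exact Real.sqrt_nonneg _
    have habs : |t * D| < s := abs_lt_of_sq_lt_sq (by linarith) hs0
    obtain ⟨hl, hr⟩ := abs_lt.mp habs
    have root : ∀ r : ℝ, r ^ 2 = (t * D) ^ 2 + A * (P - 1) →
        ∃ b : ℝ, b = (r - t * D) / A ∧ (1 + t * b * D) ^ 2 + b ^ 2 * D * P = P := by
      intro r hr
      refine ⟨_, rfl, ?_⟩
      obtain ⟨b, hb⟩ : ∃ b, b = (r - t * D) / A := ⟨_, rfl⟩
      rw [← hb]
      have hbA : b * A = r - t * D := by rw [hb]; field_simp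
      have hr' : r = b * A + t * D := by linarith
      rw [hr'] at hr
      have h5 : A * (A * b ^ 2 + 2 * b * (t * D)) = A * (P - 1) := by linarith
      have h6 := mul_left_cancel₀ hApos.ne' h5
      rw [hA] at h6
      linarith
    obtain ⟨b₁, hb₁, e₁⟩ := root s hs2
    obtain ⟨b₂, hb₂, e₂⟩ := root (-s) (by rw [neg_sq]; exact hs2)
    obtain ⟨σ₁, n₁, y₁, d₁⟩ := key b₁ e₁
    obtain ⟨σ₂, n₂, y₂, d₂⟩ := key b₂ e₂
    refine ⟨σ₁, σ₂, n₁, n₂, y₁, y₂, ?_, ?_⟩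
    · rw [d₁, hb₁]
      exact mul_pos (div_pos (by linarith) hApos) hD
    · rw [d₂, hb₂]
      exact mul_neg_of_neg_of_pos (div_neg_of_neg_of_pos (by linarith) hApos) hD
  · rintro ⟨σ₁, σ₂, n₁, n₂, y₁, y₂, d₁, d₂⟩ t ht
    rw [mem_closedBall_zero_iff] at ht
    have h1 := (real_inner_le_norm (y + t • (x - y)) σ₁)
    have h2 := (real_inner_le_norm (y + t • (x - y)) σ₂)
    rw [inner_add_left, real_inner_smul_left, y₁, n₁] at h1
    rw [inner_add_left, real_inner_smul_left, y₂, n₂] at h2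
    have t1 : t ≤ 0 := by
      by_contra hc
      have := mul_pos (not_le.mp hc) d₁
      linarith
    have t2 : 0 ≤ t := by
      by_contra hc
      have := mul_pos_of_neg_of_neg (not_le.mp hc) d₂
      linarith
    have t0 : t = 0 := le_antisymm t1 t2
    rw [t0, zero_smul, add_zero] at ht
    linarith
end

section
/- Let m ≥ 1 and let s ∈ EuclideanSpace ℝ (Fin m) with s ≠ 0. Let μ be the (m−1)-dimensional Hausdorff measure restricted to the unit sphere {ω : ‖ω‖ = 1} in EuclideanSpace ℝ (Fin m). Then the real part of i^m · ∫_{‖ω‖=1} (⟪s, ω⟫ − iε)^{−m} dμ(ω) tends to 0 as ε → 0⁺; i.e. Tendsto (fun ε : ℝ => (Complex.I ^ m * ∫ ω in {ω : ‖ω‖ = 1}, ((⟪s, ω⟫ : ℂ) − ε * Complex.I) ^ (−(m : ℤ)) ∂μ).re) (𝓝[>] 0) (𝓝 0). -/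
open scoped InnerProductSpace
open MeasureTheory Filter Topology

lemma aux_int (b : ℝ) (hb : 0 < b) :
    IntegrableOn (fun v : ℝ => Real.exp (-(v - b / v) ^ 2)) (Set.Ioi 0) := by
  have h : IntegrableOn (fun v : ℝ => Real.exp (2 * b) * Real.exp (-1 * v ^ 2)) (Set.Ioi 0) :=
    ((integrable_exp_neg_mul_sq one_pos).const_mul _).integrableOn
  refine Integrable.mono' h (by fun_prop) ?_
  refine (ae_restrict_iff' measurableSet_Ioi).2 (Eventually.of_forall fun v hv => ?_)
  have hv : 0 < v := hv
  rw [Real.norm_eq_abs, abs_of_pos (Real.exp_pos _), ← Real.exp_add]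
  apply Real.exp_le_exp.2
  have : (v - b / v) ^ 2 = v ^ 2 - 2 * b + (b / v) ^ 2 := by field_simp; ring
  rw [this]
  nlinarith [sq_nonneg (b / v)]

lemma aux_deriv1 (b v : ℝ) (hv : 0 < v) :
    HasDerivAt (fun v : ℝ => v - b / v) (1 + b / v ^ 2) v := by
  have := (hasDerivAt_id v).sub ((hasDerivAt_inv hv.ne').const_mul b)
  convert! this using 1
  field_simp; ring

lemma aux_deriv2 (b v : ℝ) (hv : 0 < v) :
    HasDerivAt (fun v : ℝ => b / v) (- (b / v ^ 2)) v := by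
  have := ((hasDerivAt_inv hv.ne').const_mul b)
  convert! this using 1
  field_simp

lemma aux_glasser (b : ℝ) (hb : 0 < b) :
    ∫ v in Set.Ioi (0 : ℝ), Real.exp (-(v - b / v) ^ 2) = √Real.pi / 2 := by
  set g : ℝ → ℝ := fun v => Real.exp (-(v - b / v) ^ 2) with hg
  have h2 : ∫ v in Set.Ioi (0 : ℝ), g v = ∫ v in Set.Ioi (0 : ℝ), (b / v ^ 2) * g v := by
    have himg : (fun v : ℝ => b / v) '' Set.Ioi 0 = Set.Ioi 0 := by
      ext w
      constructor
      · rintro ⟨v, hv, rfl⟩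
        exact div_pos hb hv
      · intro hw
        have hw : 0 < w := hw
        exact ⟨b / w, div_pos hb hw, by field_simp⟩
    have hinj : Set.InjOn (fun v : ℝ => b / v) (Set.Ioi 0) := by
      intro x hx y hy h
      have hx : 0 < x := hx
      have hy : 0 < y := hy
      simp only at h
      field_simp at h
      exact h.symm
    have := integral_image_eq_integral_abs_deriv_smul (measurableSet_Ioi (a := (0:ℝ)))
      (fun v hv => (aux_deriv2 b v hv).hasDerivWithinAt) hinj g
    rw [himg] at this
    rw [this]
    refine setIntegral_congr_fun measurableSet_Ioi fun v hv => ?_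
    have hv : 0 < v := hv
    have h3 : |-(b / v ^ 2)| = b / v ^ 2 := by rw [abs_neg, abs_of_pos (by positivity)]
    have h4 : b / (b / v) = v := by field_simp
    simp only [hg, smul_eq_mul, h3, h4]
    congr 3
    ring
  have h1 : ∫ v in Set.Ioi (0 : ℝ), (1 + b / v ^ 2) * g v = √Real.pi := by
    have himg : (fun v : ℝ => v - b / v) '' Set.Ioi 0 = Set.univ := by
      refine Set.eq_univ_of_forall fun w => ?_
      have hs : √(w ^ 2 + 4 * b) ^ 2 = w ^ 2 + 4 * b := Real.sq_sqrt (by positivity)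
      have hpos : 0 < w + √(w ^ 2 + 4 * b) := by
        have : |w| < √(w ^ 2 + 4 * b) := by
          rw [← Real.sqrt_sq_eq_abs]
          exact Real.sqrt_lt_sqrt (sq_nonneg _) (by linarith)
        linarith [neg_abs_le w]
      refine ⟨(w + √(w ^ 2 + 4 * b)) / 2, by simpa using hpos, ?_⟩
      simp only
      field_simp
      nlinarith
    have hinj : Set.InjOn (fun v : ℝ => v - b / v) (Set.Ioi 0) := by
      intro x hx y hy h
      have hx : 0 < x := hx
      have hy : 0 < y := hy
      simp only at h
      field_simp at h
      have : (x - y) * (x * y + b) = 0 := by linarith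
      rcases mul_eq_zero.1 this with h | h
      · linarith
      · nlinarith [mul_pos hx hy]
    have := integral_image_eq_integral_abs_deriv_smul (measurableSet_Ioi (a := (0:ℝ)))
      (fun v hv => (aux_deriv1 b v hv).hasDerivWithinAt) hinj (fun w => Real.exp (-1 * w ^ 2))
    rw [himg, setIntegral_univ, integral_gaussian, div_one] at this
    rw [this]
    refine setIntegral_congr_fun measurableSet_Ioi fun v hv => ?_
    have hv : 0 < v := hv
    have h3 : |1 + (b / v ^ 2)| = 1 + b / v ^ 2 := by rw [abs_of_pos (by positivity)]
    simp only [hg, smul_eq_mul, h3]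
    congr 2
    ring
  have hi := aux_int b hb
  by_cases hi2 : IntegrableOn (fun v => (b / v ^ 2) * g v) (Set.Ioi 0)
  · have : ∫ v in Set.Ioi (0 : ℝ), (1 + b / v ^ 2) * g v
      = (∫ v in Set.Ioi (0 : ℝ), g v) + ∫ v in Set.Ioi (0 : ℝ), (b / v ^ 2) * g v := by
      rw [← integral_add hi hi2]
      congr 1
      ext v
      ring
    linarith
  · exfalso
    have h0 : ∫ v in Set.Ioi (0 : ℝ), (1 + b / v ^ 2) * g v = 0 := by
      apply integral_undef
      intro h
      apply hi2
      have := h.sub hi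
      refine this.congr (Eventually.of_forall fun v => ?_)
      simp only [Pi.sub_apply, hg]
      ring
    rw [h0] at h1
    have := Real.sqrt_pos.2 Real.pi_pos
    linarith

/-- subordination -/
lemma aux_subord (b : ℝ) (hb : 0 < b) :
    Real.exp (-(2 * b)) =
      (2 / √Real.pi) * ∫ v in Set.Ioi (0 : ℝ), Real.exp (-v ^ 2 - b ^ 2 / v ^ 2) := by
  have h := aux_glasser b hb
  have : ∫ v in Set.Ioi (0 : ℝ), Real.exp (-v ^ 2 - b ^ 2 / v ^ 2)
      = Real.exp (-(2 * b)) * ∫ v in Set.Ioi (0 : ℝ), Real.exp (-(v - b / v) ^ 2) := by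
    rw [← integral_const_mul]
    refine setIntegral_congr_fun measurableSet_Ioi fun v hv => ?_
    have hv : 0 < v := hv
    simp only [← Real.exp_add]
    congr 1
    field_simp
    ring
  rw [this, h]
  have := Real.sqrt_pos.2 Real.pi_pos
  field_simp

lemma aux_subord' (b : ℝ) (hb : 0 ≤ b) :
    Real.exp (-(2 * b)) =
      (2 / √Real.pi) * ∫ v in Set.Ioi (0 : ℝ), Real.exp (-v ^ 2 - b ^ 2 / v ^ 2) := by
  rcases hb.eq_or_lt with rfl | hb
  · have := integral_gaussian_Ioi 1
    simp only [neg_mul, one_mul, div_one] at this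
    simp [this, (Real.sqrt_pos.2 Real.pi_pos).ne']
  · exact aux_subord b hb

lemma aux_rpow (v ε : ℝ) (hv : 0 < v) (hε : 0 < ε) (m : ℕ) :
    (Real.pi / (ε ^ 2 / (4 * v ^ 2))) ^ ((m : ℝ) / 2)
      = (4 * Real.pi / ε ^ 2) ^ ((m : ℝ) / 2) * v ^ (m : ℝ) := by
  have : Real.pi / (ε ^ 2 / (4 * v ^ 2)) = (4 * Real.pi / ε ^ 2) * v ^ 2 := by field_simp
  have hp := Real.pi_pos
  rw [this, Real.mul_rpow (by positivity) (by positivity), ← Real.rpow_natCast v 2,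
    ← Real.rpow_mul hv.le]
  congr 2
  push_cast
  ring

lemma aux_poisson (m : ℕ) (ρ : ℝ) (hρ : 0 < ρ) : ∃ K : ℝ, ∀ ε : ℝ, 0 < ε →
    ∀ s : EuclideanSpace ℝ (Fin m), ‖s‖ = ρ →
    ‖∫ x : EuclideanSpace ℝ (Fin m),
      Complex.exp (-(ε * ‖x‖ : ℝ) + (-Complex.I) * (⟪s, x⟫_ℝ : ℂ))‖ ≤ K * ε := by
  refine ⟨(2 / √Real.pi) * ((4 * Real.pi) ^ ((m : ℝ) / 2) * (ρ ^ (-((m : ℝ) + 1)) * (1 / 2) *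
    Real.Gamma (((m : ℝ) + 1) / 2))), fun ε hε s hs => ?_⟩
  have hpi := Real.pi_pos
  set F : EuclideanSpace ℝ (Fin m) → ℝ → ℂ := fun x v => Complex.exp ((-v ^ 2 : ℝ)) *
    Complex.exp (-((ε ^ 2 / (4 * v ^ 2) : ℝ) : ℂ) * (‖x‖ : ℂ) ^ 2 + (-Complex.I) * (⟪s, x⟫_ℝ : ℂ))
    with hF
  have hFn : ∀ x v, ‖F x v‖ = Real.exp (-v ^ 2) * Real.exp (-(ε ^ 2 / (4 * v ^ 2)) * ‖x‖ ^ 2) := by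
    intro x v
    simp only [hF, norm_mul, Complex.norm_exp]
    congr 2
    rw [← Complex.ofReal_pow, ← Complex.ofReal_neg, ← Complex.ofReal_mul, Complex.add_re,
      Complex.ofReal_re]
    simp
  have hbpos : ∀ v : ℝ, 0 < v → 0 < ε ^ 2 / (4 * v ^ 2) := fun v hv => by positivity
  have hFint : Integrable (Function.uncurry F)
      ((volume : Measure (EuclideanSpace ℝ (Fin m))).prod (volume.restrict (Set.Ioi (0 : ℝ)))) := by
    rw [integrable_prod_iff' (by
      apply Measurable.aestronglyMeasurable
      simp only [hF, Function.uncurry_def]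
      fun_prop)]
    constructor
    · refine (ae_restrict_iff' measurableSet_Ioi).2 (Eventually.of_forall fun v hv => ?_)
      simp only [Function.uncurry_def, hF]
      refine Integrable.const_mul ?_ _
      exact GaussianFourier.integrable_cexp_neg_mul_sq_norm_add
        (by rw [Complex.ofReal_re]; exact hbpos v hv) _ _
    · have h1 : IntegrableOn (fun v : ℝ => (4 * Real.pi / ε ^ 2) ^ ((m : ℝ) / 2) *
          (v ^ (m : ℝ) * Real.exp (-1 * v ^ 2))) (Set.Ioi 0) :=
        (integrableOn_rpow_mul_exp_neg_mul_sq one_pos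
          (by linarith [(Nat.cast_nonneg m : (0:ℝ) ≤ m)])).const_mul _
      refine h1.congr ((ae_restrict_iff' measurableSet_Ioi).2 (Eventually.of_forall fun v hv => ?_))
      simp only [Function.uncurry_def, hFn]
      rw [integral_const_mul, GaussianFourier.integral_rexp_neg_mul_sq_norm (hbpos v hv),
        finrank_euclideanSpace_fin, aux_rpow v ε hv hε m]
      ring_nf
  have hstep : ∀ x : EuclideanSpace ℝ (Fin m), Complex.exp (-(ε * ‖x‖ : ℝ) + (-Complex.I) * (⟪s, x⟫_ℝ : ℂ))
      = ((2 / √Real.pi : ℝ) : ℂ) * ∫ v in Set.Ioi (0 : ℝ), F x v := by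
    intro x
    have h := aux_subord' (ε * ‖x‖ / 2) (by positivity)
    rw [Complex.exp_add]
    have h2 : Complex.exp (-(ε * ‖x‖ : ℝ)) = ((Real.exp (-(2 * (ε * ‖x‖ / 2))) : ℝ) : ℂ) := by
      push_cast
      congr 1
      ring
    rw [h2, h, Complex.ofReal_mul, mul_assoc, ← integral_complex_ofReal, ← integral_mul_const]
    congr 1
    refine setIntegral_congr_fun measurableSet_Ioi fun v hv => ?_
    have hv : 0 < v := hv
    simp only [hF]
    rw [Complex.ofReal_exp, ← Complex.exp_add, ← Complex.exp_add]
    congr 1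
    rw [← add_assoc]
    congr 1
    push_cast
    have : (v : ℂ) ≠ 0 := by exact_mod_cast hv.ne'
    field_simp
    ring
  have hinner : ∀ v : ℝ, 0 < v → ‖∫ x : EuclideanSpace ℝ (Fin m), F x v‖ ≤ (4 * Real.pi / ε ^ 2) ^ ((m : ℝ) / 2) *
      (v ^ (m : ℝ) * Real.exp (-(ρ ^ 2 / ε ^ 2) * v ^ (2 : ℝ))) := by
    intro v hv
    simp only [hF]
    rw [integral_const_mul, GaussianFourier.integral_cexp_neg_mul_sq_norm_add
      (by rw [Complex.ofReal_re]; exact hbpos v hv), finrank_euclideanSpace_fin, norm_mul, norm_mul,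
      hs]
    have e1 : ‖Complex.exp ((-v ^ 2 : ℝ))‖ ≤ 1 := by
      rw [Complex.norm_exp, Complex.ofReal_re]
      exact Real.exp_le_one_iff.2 (by nlinarith)
    have e2 : ‖((Real.pi : ℂ) / ((ε ^ 2 / (4 * v ^ 2) : ℝ) : ℂ)) ^ ((m : ℂ) / 2)‖
        = (4 * Real.pi / ε ^ 2) ^ ((m : ℝ) / 2) * v ^ (m : ℝ) := by
      rw [← aux_rpow v ε hv hε m, ← Complex.ofReal_div,
        Complex.norm_cpow_eq_rpow_re_of_pos (by positivity)]
      congr 1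
      simp
    have e3 : ‖Complex.exp ((-Complex.I) ^ 2 * (ρ : ℂ) ^ 2 / (4 * ((ε ^ 2 / (4 * v ^ 2) : ℝ) : ℂ)))‖
        = Real.exp (-(ρ ^ 2 / ε ^ 2) * v ^ (2 : ℝ)) := by
      have : (-Complex.I) ^ 2 * (ρ : ℂ) ^ 2 / (4 * ((ε ^ 2 / (4 * v ^ 2) : ℝ) : ℂ))
        = ((-(ρ ^ 2 / ε ^ 2) * v ^ (2 : ℝ) : ℝ) : ℂ) := by
        rw [neg_sq, Complex.I_sq]
        have hv' : (v : ℂ) ≠ 0 := by exact_mod_cast hv.ne'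
        have hε' : (ε : ℂ) ≠ 0 := by exact_mod_cast hε.ne'
        rw [show v ^ (2 : ℝ) = v ^ 2 by exact_mod_cast Real.rpow_natCast v 2]
        push_cast
        field_simp
      rw [this, Complex.norm_exp, Complex.ofReal_re]
    rw [e2, e3, ← mul_assoc ((4 * Real.pi / ε ^ 2) ^ ((m : ℝ) / 2))]
    exact mul_le_of_le_one_left (by positivity) e1
  simp_rw [hstep]
  rw [integral_const_mul, integral_integral_swap hFint, norm_mul, mul_assoc]
  have hc : (0:ℝ) ≤ 2 / √Real.pi := by positivity
  rw [Complex.norm_real, Real.norm_of_nonneg hc]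
  refine mul_le_mul_of_nonneg_left ?_ hc
  have hm1 : -1 < (m : ℝ) := by linarith [(Nat.cast_nonneg m : (0:ℝ) ≤ m)]
  have hb2 : 0 < ρ ^ 2 / ε ^ 2 := by positivity
  have hint : IntegrableOn (fun v : ℝ => (4 * Real.pi / ε ^ 2) ^ ((m : ℝ) / 2) *
      (v ^ (m : ℝ) * Real.exp (-(ρ ^ 2 / ε ^ 2) * v ^ (2 : ℝ)))) (Set.Ioi 0) :=
    (integrableOn_rpow_mul_exp_neg_mul_rpow hm1 (by norm_num) hb2).const_mul _
  refine (norm_integral_le_of_norm_le hint ((ae_restrict_iff' measurableSet_Ioi).2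
    (Eventually.of_forall fun v hv => hinner v hv))).trans ?_
  rw [integral_const_mul, integral_rpow_mul_exp_neg_mul_rpow two_pos hm1 hb2]
  apply le_of_eq
  have e1 : (4 * Real.pi / ε ^ 2) ^ ((m : ℝ) / 2) = (4 * Real.pi) ^ ((m : ℝ) / 2) * ε ^ (-(m : ℝ)) := by
    rw [Real.div_rpow (by positivity) (by positivity), Real.rpow_neg hε.le, ← Real.rpow_natCast ε 2,
      ← Real.rpow_mul hε.le, div_eq_mul_inv]
    congr 3
    push_cast
    ring
  have e2 : (ρ ^ 2 / ε ^ 2) ^ (-((m : ℝ) + 1) / 2) = ρ ^ (-((m : ℝ) + 1)) * ε ^ ((m : ℝ) + 1) := by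
    rw [← div_pow, ← Real.rpow_natCast (ρ / ε) 2, ← Real.rpow_mul (by positivity),
      Real.div_rpow hρ.le hε.le, div_eq_mul_inv, ← Real.rpow_neg hε.le]
    push_cast
    congr 2 <;> ring
  rw [e1, e2, Real.rpow_add hε, Real.rpow_one, Real.rpow_neg hε.le]
  have : ε ^ (m : ℝ) ≠ 0 := (Real.rpow_pos_of_pos hε _).ne'
  field_simp

lemma aux_lap_int (n : ℕ) (p : ℂ) (hp : 0 < p.re) :
    IntegrableOn (fun t : ℝ => (t : ℂ) ^ n * Complex.exp (-(p * t))) (Set.Ioi 0) := by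
  have h := integrableOn_rpow_mul_exp_neg_mul_rpow (s := (n : ℝ)) (p := 1) (b := p.re)
    (by linarith [(Nat.cast_nonneg n : (0:ℝ) ≤ n)]) one_pos hp
  refine Integrable.mono' h (by fun_prop)
    ((ae_restrict_iff' measurableSet_Ioi).2 (Eventually.of_forall fun t ht => ?_))
  have ht : 0 < t := ht
  simp [Complex.norm_exp, abs_of_pos ht]

lemma aux_lap (n : ℕ) (p : ℂ) (hp : 0 < p.re) :
    ∫ t in Set.Ioi (0 : ℝ), (t : ℂ) ^ n * Complex.exp (-(p * t)) = n.factorial / p ^ (n + 1) := by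
  have hp0 : p ≠ 0 := by
    rintro rfl
    simp at hp
  induction n with
  | zero =>
    have := integral_exp_mul_complex_Ioi (a := -p) (by simpa using hp) 0
    simpa using this
  | succ n ih =>
    have hd : ∀ t : ℝ, HasDerivAt (fun t : ℝ => -((t : ℂ) ^ (n + 1) * Complex.exp (-(p * t))) / p)
        ((t : ℂ) ^ (n + 1) * Complex.exp (-(p * t)) -
          ((n + 1 : ℕ) / p) * ((t : ℂ) ^ n * Complex.exp (-(p * t)))) t := by
      intro t
      have h1 : HasDerivAt (fun z : ℂ => -(z ^ (n + 1) * Complex.exp (-(p * z))) / p)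
        (-(((n + 1 : ℕ) * (t : ℂ) ^ n) * Complex.exp (-(p * t)) +
          (t : ℂ) ^ (n + 1) * (Complex.exp (-(p * t)) * (-(p * 1)))) / p) (t : ℂ) :=
        (((hasDerivAt_pow (n + 1) (t : ℂ)).mul
          (((hasDerivAt_id (t : ℂ)).const_mul p).neg.cexp)).neg.div_const p)
      have h2 := h1.comp_ofReal
      convert! h2 using 1
      field_simp
      ring
    have hlim : Tendsto (fun t : ℝ => -((t : ℂ) ^ (n + 1) * Complex.exp (-(p * t))) / p) atTop
        (𝓝 0) := by
      rw [tendsto_zero_iff_norm_tendsto_zero]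
      have h := (tendsto_rpow_mul_exp_neg_mul_atTop_nhds_zero ((n + 1 : ℕ) : ℝ) p.re hp).div_const ‖p‖
      rw [zero_div] at h
      refine h.congr' ?_
      filter_upwards [eventually_gt_atTop 0] with t ht
      rw [Real.rpow_natCast]
      simp [Complex.norm_exp, abs_of_pos ht]
    have hi1 := aux_lap_int (n + 1) p hp
    have hi2 := (aux_lap_int n p hp).const_mul ((n + 1 : ℕ) / p)
    have := integral_Ioi_of_hasDerivAt_of_tendsto (a := (0 : ℝ)) (hd 0).continuousAt.continuousWithinAt
      (fun t _ => hd t) (hi1.sub hi2) hlim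
    rw [integral_sub hi1 hi2, integral_const_mul, ih] at this
    simp at this
    rw [sub_eq_zero] at this
    rw [this, Nat.factorial_succ]
    push_cast
    field_simp
    ring

lemma aux_polar (m : ℕ) (hm : 1 ≤ m) (f : EuclideanSpace ℝ (Fin m) → ℂ) (hf : Integrable f) :
    ∫ x, f x = ∫ σ, (∫ r in Set.Ioi (0 : ℝ), (r : ℂ) ^ (m - 1) * f (r • σ.1))
      ∂(volume : Measure (EuclideanSpace ℝ (Fin m))).toSphere := by
  have : Nontrivial (EuclideanSpace ℝ (Fin m)) := by
    have : Nonempty (Fin m) := ⟨⟨0, hm⟩⟩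
    infer_instance
  set g : Metric.sphere (0 : EuclideanSpace ℝ (Fin m)) 1 × Set.Ioi (0 : ℝ) → ℂ :=
    fun p => f (p.2.1 • p.1.1) with hg
  have hmp := (volume : Measure (EuclideanSpace ℝ (Fin m))).measurePreserving_homeomorphUnitSphereProd
  have hgc : ∀ x, g (homeomorphUnitSphereProd _ x) = f x.1 := by
    intro x
    have hx : ‖x.1‖ ≠ 0 := norm_ne_zero_iff.2 x.2
    simp [hg, smul_smul, hx]
  have hgi : Integrable g ((volume : Measure (EuclideanSpace ℝ (Fin m))).toSphere.prod
      (Measure.volumeIoiPow (Module.finrank ℝ (EuclideanSpace ℝ (Fin m)) - 1))) := by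
    rw [← hmp.integrable_comp_emb (Homeomorph.measurableEmbedding _)]
    have : Integrable (fun x : ({(0)}ᶜ : Set (EuclideanSpace ℝ (Fin m))) => f x.1)
      (Measure.comap Subtype.val volume) :=
      (integrableOn_iff_comap_subtypeVal (measurableSet_singleton _).compl).1 hf.integrableOn
    exact this.congr (Eventually.of_forall fun x => (hgc x).symm)
  calc
    ∫ x, f x = ∫ x : ({(0)}ᶜ : Set (EuclideanSpace ℝ (Fin m))), f x.1 ∂(volume.comap Subtype.val) := by
      rw [integral_subtype_comap (measurableSet_singleton _).compl f, restrict_compl_singleton]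
    _ = ∫ p, g p ∂(volume : Measure (EuclideanSpace ℝ (Fin m))).toSphere.prod
        (.volumeIoiPow (Module.finrank ℝ (EuclideanSpace ℝ (Fin m)) - 1)) := by
      rw [← hmp.integral_comp (Homeomorph.measurableEmbedding _)]
      simp_rw [hgc]
    _ = _ := by
      rw [integral_prod _ hgi]
      congr 1
      ext σ
      simp only [Measure.volumeIoiPow, ENNReal.ofReal, hg, finrank_euclideanSpace_fin]
      rw [integral_withDensity_eq_integral_smul,
        integral_subtype_comap measurableSet_Ioi fun a ↦ Real.toNNReal (a ^ (m - 1)) • f (a • σ.1),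
        setIntegral_congr_fun measurableSet_Ioi fun x hx ↦ ?_]
      · simp only [NNReal.smul_def]
        rw [Real.coe_toNNReal _ (pow_nonneg (Set.mem_Ioi.1 hx).le _)]
        simp
      · exact (measurable_subtype_coe.pow_const _).real_toNNReal

lemma aux_J_int (m : ℕ) (hm : 1 ≤ m) (ε : ℝ) (hε : 0 < ε) (s : EuclideanSpace ℝ (Fin m)) :
    Integrable (fun x : EuclideanSpace ℝ (Fin m) =>
      Complex.exp (-(ε * ‖x‖ : ℝ) + (-Complex.I) * (⟪s, x⟫_ℝ : ℂ))) := by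
  have : Nontrivial (EuclideanSpace ℝ (Fin m)) := by
    have : Nonempty (Fin m) := ⟨⟨0, hm⟩⟩
    infer_instance
  have h : Integrable (fun x : EuclideanSpace ℝ (Fin m) => (fun r : ℝ => Real.exp (-(ε * r))) ‖x‖) := by
    refine (integrable_fun_norm_addHaar volume (f := fun r : ℝ => Real.exp (-(ε * r)))).2 ?_
    have h := integrableOn_rpow_mul_exp_neg_mul_rpow (s := ((m - 1 : ℕ) : ℝ)) (p := 1) (b := ε)
      (by linarith [(Nat.cast_nonneg (m - 1) : (0:ℝ) ≤ (m - 1 : ℕ))]) one_pos hε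
    simpa using h
  refine h.mono' (by
    apply Continuous.aestronglyMeasurable
    fun_prop) (Eventually.of_forall fun x => ?_)
  rw [Complex.norm_exp]
  simp

lemma aux_T (m : ℕ) (hm : 1 ≤ m) (ρ : ℝ) (hρ : 0 < ρ) : ∃ K : ℝ, ∀ ε : ℝ, 0 < ε →
    ∀ s : EuclideanSpace ℝ (Fin m), ‖s‖ = ρ →
    ‖∫ σ, ((⟪s, σ.1⟫_ℝ : ℂ) - (ε : ℂ) * Complex.I) ^ (-(m : ℤ))
      ∂(volume : Measure (EuclideanSpace ℝ (Fin m))).toSphere‖ ≤ K * ε := by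
  obtain ⟨K, hK⟩ := aux_poisson m ρ hρ
  refine ⟨K, fun ε hε s hs => le_trans ?_ (hK ε hε s hs)⟩
  rw [aux_polar m hm _ (aux_J_int m hm ε hε s)]
  have hin : ∀ σ : Metric.sphere (0 : EuclideanSpace ℝ (Fin m)) 1,
      ∫ r in Set.Ioi (0 : ℝ), (r : ℂ) ^ (m - 1) *
        Complex.exp (-(ε * ‖r • σ.1‖ : ℝ) + (-Complex.I) * (⟪s, r • σ.1⟫_ℝ : ℂ))
      = ((m - 1).factorial * (Complex.I ^ m)⁻¹) *
        ((⟪s, σ.1⟫_ℝ : ℂ) - (ε : ℂ) * Complex.I) ^ (-(m : ℤ)) := by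
    intro σ
    have h := aux_lap (m - 1) (Complex.I * ((⟪s, σ.1⟫_ℝ : ℂ) - (ε : ℂ) * Complex.I)) (by simpa only [Complex.mul_re, Complex.I_re, Complex.I_im, Complex.sub_im, Complex.mul_im, Complex.ofReal_re, Complex.ofReal_im, zero_mul, one_mul, mul_zero, mul_one, zero_sub, neg_neg, add_zero] using hε)
    rw [Nat.sub_add_cancel hm, mul_pow] at h
    rw [zpow_neg, zpow_natCast, mul_assoc, ← mul_inv, ← div_eq_mul_inv, ← h]
    refine setIntegral_congr_fun measurableSet_Ioi fun r hr => ?_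
    have hr : 0 < r := hr
    have hσ : ‖σ.1‖ = 1 := by simpa using σ.2
    congr 2
    rw [norm_smul, hσ, Real.norm_of_nonneg hr.le, inner_smul_right]
    push_cast
    linear_combination -(r : ℂ) * ε * Complex.I_mul_I
  simp_rw [hin]
  rw [integral_const_mul, norm_mul]
  refine le_mul_of_one_le_left (norm_nonneg _) ?_
  simp only [norm_mul, norm_inv, norm_pow, Complex.norm_I, one_pow, inv_one, mul_one]
  rw [Complex.norm_natCast]
  exact_mod_cast Nat.one_le_iff_ne_zero.2 (Nat.factorial_ne_zero _)

lemma aux_ne (a ε : ℝ) (hε : 0 < ε) : (a : ℂ) - (ε : ℂ) * Complex.I ≠ 0 := by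
  intro h
  have := congrArg Complex.im h
  simp at this
  exact hε.ne' this

lemma aux_cont (m : ℕ) (ε : ℝ) (hε : 0 < ε) :
    Continuous (fun p : EuclideanSpace ℝ (Fin m) × EuclideanSpace ℝ (Fin m) =>
      ((⟪p.1, p.2⟫_ℝ : ℂ) - (ε : ℂ) * Complex.I) ^ (-(m : ℤ))) := by
  refine Continuous.zpow₀ (by fun_prop) _ fun p => Or.inl (aux_ne _ _ hε)

lemma aux_bd (m : ℕ) (a ε : ℝ) (hε : 0 < ε) :
    ‖((a : ℂ) - (ε : ℂ) * Complex.I) ^ (-(m : ℤ))‖ ≤ (ε ^ m)⁻¹ := by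
  rw [zpow_neg, zpow_natCast, norm_inv, norm_pow]
  have : ε ≤ ‖(a : ℂ) - (ε : ℂ) * Complex.I‖ := by
    have := Complex.abs_im_le_norm ((a : ℂ) - (ε : ℂ) * Complex.I)
    simpa [abs_of_pos hε] using this
  gcongr

lemma aux_main (m : ℕ) (hm : 1 ≤ m)
    (s : EuclideanSpace ℝ (Fin m)) (hs : s ≠ 0)
    (ν : Measure (EuclideanSpace ℝ (Fin m)))
    (hν : ν = (MeasureTheory.Measure.hausdorffMeasure ((m : ℝ) - 1)).restrict
      {ω : EuclideanSpace ℝ (Fin m) | ‖ω‖ = 1}) :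
    ∃ K : ℝ, ∀ ε : ℝ, 0 < ε →
      ‖∫ ω, ((⟪s, ω⟫_ℝ : ℂ) - (ε : ℂ) * Complex.I) ^ (-(m : ℤ)) ∂ν‖ ≤ K * ε := by
  have : Nontrivial (EuclideanSpace ℝ (Fin m)) := by
    have : Nonempty (Fin m) := ⟨⟨0, hm⟩⟩
    infer_instance
  have hSm : MeasurableSet {ω : EuclideanSpace ℝ (Fin m) | ‖ω‖ = 1} :=
    measurableSet_eq_fun (by fun_prop) (by fun_prop)
  have hae : ∀ᵐ ω ∂ν, ‖ω‖ = 1 := by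
    rw [hν]
    exact ae_restrict_mem hSm
  have hρ : 0 < ‖s‖ := norm_pos_iff.2 hs
  by_cases hfin : IsFiniteMeasure ν
  · obtain ⟨K, hK⟩ := aux_T m hm ‖s‖ hρ
    set τ := (volume : Measure (EuclideanSpace ℝ (Fin m))).toSphere with hτ
    have hτpos : 0 < τ.real Set.univ := by
      rw [measureReal_def]
      refine ENNReal.toReal_pos ?_ (measure_ne_top _ _)
      rw [Ne, Measure.measure_univ_eq_zero]
      exact Measure.toSphere_ne_zero _
    refine ⟨(τ.real Set.univ)⁻¹ * (K * ν.real Set.univ), fun ε hε => ?_⟩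
    have hinv : ∀ s' : EuclideanSpace ℝ (Fin m), ‖s'‖ = ‖s‖ →
        ∫ ω, ((⟪s', ω⟫_ℝ : ℂ) - (ε : ℂ) * Complex.I) ^ (-(m : ℤ)) ∂ν
        = ∫ ω, ((⟪s, ω⟫_ℝ : ℂ) - (ε : ℂ) * Complex.I) ^ (-(m : ℤ)) ∂ν := by
      intro s' hs'
      set e := (ℝ ∙ (s - s'))ᗮ.reflection with he
      have hes : e s = s' := Submodule.reflection_sub hs'.symm
      have hmp : MeasurePreserving e ν ν := by
        have h := (e.toIsometryEquiv.measurePreserving_hausdorffMeasure ((m : ℝ) - 1)).restrict_preimage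
          hSm
        have hpre : e.toIsometryEquiv ⁻¹' {ω : EuclideanSpace ℝ (Fin m) | ‖ω‖ = 1}
          = {ω : EuclideanSpace ℝ (Fin m) | ‖ω‖ = 1} := by
          ext ω
          simp
        rw [hpre, ← hν] at h
        exact h
      rw [← hmp.integral_comp e.toHomeomorph.measurableEmbedding]
      simp_rw [← hes, LinearIsometryEquiv.inner_map_map]
    have hcont := aux_cont m ε hε
    have hswap : ∫ σ, (∫ ω, ((⟪‖s‖ • σ.1, ω⟫_ℝ : ℂ) - (ε : ℂ) * Complex.I) ^ (-(m : ℤ)) ∂ν) ∂τ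
        = ∫ ω, (∫ σ, ((⟪‖s‖ • σ.1, ω⟫_ℝ : ℂ) - (ε : ℂ) * Complex.I) ^ (-(m : ℤ)) ∂τ) ∂ν := by
      apply integral_integral_swap
      refine Integrable.of_bound (C := (ε ^ m)⁻¹) ?_ (Eventually.of_forall fun p => aux_bd m _ ε hε)
      apply Continuous.aestronglyMeasurable
      exact hcont.comp (f := fun p : Metric.sphere (0 : EuclideanSpace ℝ (Fin m)) 1 ×
        EuclideanSpace ℝ (Fin m) => (‖s‖ • p.1.1, p.2)) (by fun_prop)
    have hleft : ∫ σ, (∫ ω, ((⟪‖s‖ • σ.1, ω⟫_ℝ : ℂ) - (ε : ℂ) * Complex.I) ^ (-(m : ℤ)) ∂ν) ∂τ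
        = τ.real Set.univ • ∫ ω, ((⟪s, ω⟫_ℝ : ℂ) - (ε : ℂ) * Complex.I) ^ (-(m : ℤ)) ∂ν := by
      rw [← integral_const]
      congr 1
      ext σ
      apply hinv
      have hσ : ‖σ.1‖ = 1 := by simpa using σ.2
      rw [norm_smul, hσ, norm_norm, mul_one]
    have hright : ‖∫ ω, (∫ σ, ((⟪‖s‖ • σ.1, ω⟫_ℝ : ℂ) - (ε : ℂ) * Complex.I) ^ (-(m : ℤ)) ∂τ) ∂ν‖
        ≤ (K * ε) * ν.real Set.univ := by
      apply norm_integral_le_of_norm_le_const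
      filter_upwards [hae] with ω hω
      have h := hK ε hε (‖s‖ • ω) (by rw [norm_smul, hω, norm_norm, mul_one])
      have h2 : ∀ σ : EuclideanSpace ℝ (Fin m), ⟪‖s‖ • σ, ω⟫_ℝ = ⟪‖s‖ • ω, σ⟫_ℝ := by
        intro σ
        rw [real_inner_smul_left, real_inner_smul_left, real_inner_comm]
      simp_rw [h2]
      exact h
    rw [← hswap, hleft, norm_smul, Real.norm_of_nonneg hτpos.le] at hright
    rw [mul_assoc, inv_mul_eq_div, le_div_iff₀ hτpos]
    linarith
  · refine ⟨0, fun ε hε => ?_⟩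
    rw [integral_undef, norm_zero, zero_mul]
    intro h
    apply hfin
    have hpos : 0 < ((‖s‖ + ε) ^ m)⁻¹ := by positivity
    have hc : Integrable (fun _ : EuclideanSpace ℝ (Fin m) => ((‖s‖ + ε) ^ m)⁻¹) ν := by
      refine h.norm.mono' (by fun_prop) ?_
      filter_upwards [hae] with ω hω
      rw [Real.norm_of_nonneg hpos.le, zpow_neg, zpow_natCast, norm_inv, norm_pow]
      have h1 : ‖(⟪s, ω⟫_ℝ : ℂ) - (ε : ℂ) * Complex.I‖ ≤ ‖s‖ + ε := by
        refine (norm_sub_le _ _).trans ?_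
        have := abs_real_inner_le_norm s ω
        rw [hω, mul_one] at this
        simpa [abs_of_pos hε] using this
      have h2 : 0 < ‖(⟪s, ω⟫_ℝ : ℂ) - (ε : ℂ) * Complex.I‖ := norm_pos_iff.2 (aux_ne _ _ hε)
      gcongr
    rcases integrable_const_iff.1 hc with h | h
    · exact absurd h hpos.ne'
    · exact h

/-- Instance of Theorem A.20 of [Pa16]: for `s ≠ 0`, the real part of
`iᵐ ∫_{Sᵐ⁻¹} (⟪s, ω⟫ − iε)^{−m} dμ(ω)` (with `μ` the `(m−1)`-dimensional
Hausdorff measure on the unit sphere) tends to `0` as `ε → 0⁺`. -/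
theorem re_pow_integral_sphere_tendsto_zero (m : ℕ) (hm : 1 ≤ m)
    (s : EuclideanSpace ℝ (Fin m)) (hs : s ≠ 0)
    (μ : Measure (EuclideanSpace ℝ (Fin m)))
    (hμ : μ = (MeasureTheory.Measure.hausdorffMeasure ((m : ℝ) - 1)).restrict
      {ω : EuclideanSpace ℝ (Fin m) | ‖ω‖ = 1}) :
    Tendsto (fun ε : ℝ =>
        (Complex.I ^ m *
          ∫ ω in {ω : EuclideanSpace ℝ (Fin m) | ‖ω‖ = 1},
            ((⟪s, ω⟫_ℝ : ℂ) - (ε : ℂ) * Complex.I) ^ (-(m : ℤ)) ∂μ).re)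
      (𝓝[>] (0 : ℝ)) (𝓝 0) := by
  obtain ⟨K, hK⟩ := aux_main m hm s hs μ hμ
  have hμ2 : μ.restrict {ω : EuclideanSpace ℝ (Fin m) | ‖ω‖ = 1} = μ := by
    have hSm : MeasurableSet {ω : EuclideanSpace ℝ (Fin m) | ‖ω‖ = 1} :=
      measurableSet_eq_fun (by fun_prop) (by fun_prop)
    rw [hμ, Measure.restrict_restrict hSm, Set.inter_self]
  rw [hμ2]
  have hlim : Tendsto (fun ε : ℝ => K * ε) (𝓝[>] (0 : ℝ)) (𝓝 0) := by
    have : Tendsto (fun ε : ℝ => K * ε) (𝓝 0) (𝓝 (K * 0)) := tendsto_id.const_mul K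
    rw [mul_zero] at this
    exact this.mono_left nhdsWithin_le_nhds
  refine squeeze_zero_norm' ?_ hlim
  filter_upwards [self_mem_nhdsWithin] with ε hε
  refine le_trans ?_ (hK ε hε)
  rw [Real.norm_eq_abs]
  refine (Complex.abs_re_le_norm _).trans ?_
  rw [norm_mul, norm_pow, Complex.norm_I, one_pow, one_mul]
end
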